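/- Let μ_n be probability measures on Ξ_n with limsup_{n→∞} n·ℐ_n(μ_n) < ∞. Then for every sufficiently small ε ∈ (0,1) (in particular small enough that the cubes Q_ε(z), z ∈ 𝒫, are pairwise disjoint), limsup_{n→∞} n·Σ_{z∈𝒫} Σ_{x∈Q^n_ε(z)} μ_n(x)·|x − z|² < ∞, where 𝒫 denotes the set of critical points of F and |x − z| the torus distance. -/

import Mathlib

/-!
Since `π_n(x) R_n(x,y) = √(π_n(x) π_n(y))` is symmetric, expanding the square in the rate functional
turns it into a Dirichlet form of `√μ` plus a potential:
`ℐ_n(μ) = ½ Σ_{x∼y} (√μ(x) - √μ(y))² + Σ_x μ(x) V_n(x)`, `V_n(x) = Σ_{y∼x} (R_n(x,y) - 1)`,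
where the first sum runs over ordered pairs. Dropping the Dirichlet form, `Σ_x μ(x) V_n(x) ≤ ℐ_n(μ)`
(`IT_lower`).

A Taylor expansion of `F` along the axes gives exponents `∓∂ᵢF(x)/2 + O(1/n)` in the rates, uniformly
in `x`, because `F` is `C²` on a compact box. As `eᵖ + e⁻ᵖ - 2 ≥ p²`, this yields
`V_n(x) ≥ |∇F(x)|²/4 - C/n` (`potential_lower`), and hence
`n Σ_x μ_n(x) |∇F(x)|² ≤ 4 (n ℐ_n(μ_n) + C)`, which is bounded.

Finally, the Hessian at a critical point `z` is invertible, so `|x - z|² ≤ C_z |∇F(x)|²` on a small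
torus cube around `z` (`tdist_bound`), and the weighted second moments are controlled by the
quantity above.
-/


open Filter MeasureTheory
open scoped ENNReal Classical

noncomputable section

/-- Discretization of the torus `𝕋^d = ℝ^d/ℤ^d`: the points `k/n`, `k ∈ {0,…,n-1}^d`,
taken as representatives in the fundamental domain `[0,1)^d`. -/
def XiT (d n : ℕ) : Finset (Fin d → ℝ) :=
  (Finset.univ : Finset (Fin d → Fin n)).image fun k i => (k i : ℝ) / n

/-- `x` and `y` are nearest neighbours of the discretized torus: `y - x ≡ ±eᵢ/n mod ℤ^d`. -/
def NbrT (d n : ℕ) (x y : Fin d → ℝ) : Prop :=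
  ∃ i : Fin d, ∃ s : ℝ, (s = 1 ∨ s = -1) ∧ ∃ v : Fin d → ℤ,
    ∀ j, y j = x j + (if j = i then s / n else 0) + (v j : ℝ)

/-- Partition function `Z_{F,n}`. -/
def ZT (d : ℕ) (F : (Fin d → ℝ) → ℝ) (n : ℕ) : ℝ :=
  ∑ x ∈ XiT d n, Real.exp (-(n : ℝ) * F x)

/-- Stationary measure `π_n(x) = e^{-nF(x)}/Z_{F,n}`. -/
def piT (d : ℕ) (F : (Fin d → ℝ) → ℝ) (n : ℕ) (x : Fin d → ℝ) : ℝ :=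
  Real.exp (-(n : ℝ) * F x) / ZT d F n

/-- Jump rates `R_n(x,y) = e^{-(n/2)(F(y)-F(x))}` for nearest neighbours, `0` otherwise. -/
def RT (d : ℕ) (F : (Fin d → ℝ) → ℝ) (n : ℕ) (x y : Fin d → ℝ) : ℝ :=
  if NbrT d n x y then Real.exp (-((n : ℝ) / 2) * (F y - F x)) else 0

/-- Level-two large deviations rate functional `ℐ_n`. -/
def IT (d : ℕ) (F : (Fin d → ℝ) → ℝ) (n : ℕ) (μ : (Fin d → ℝ) → ℝ) : ℝ :=
  (1 / 2) * ∑ x ∈ XiT d n, ∑ y ∈ (XiT d n).erase x,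
    piT d F n x * RT d F n x y *
      (Real.sqrt (μ y / piT d F n y) - Real.sqrt (μ x / piT d F n x)) ^ 2

/-- The function `G(x) = Σᵢ 2(cosh(∂ᵢF(x)/2) - 1)`. -/
def GT (d : ℕ) (F : (Fin d → ℝ) → ℝ) (x : Fin d → ℝ) : ℝ :=
  ∑ i : Fin d, 2 * (Real.cosh (fderiv ℝ F x (Pi.single i 1) / 2) - 1)

/-- A function on `ℝ^d` is `ℤ^d`-periodic, i.e. well defined on the torus. -/
def PerT (d : ℕ) (g : (Fin d → ℝ) → ℝ) : Prop :=
  ∀ (x : Fin d → ℝ) (v : Fin d → ℤ), g (fun i => x i + (v i : ℝ)) = g x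

/-- The (Euclidean) torus distance. -/
def tdistT (d : ℕ) (x y : Fin d → ℝ) : ℝ :=
  ⨅ v : Fin d → ℤ, Real.sqrt (∑ i, (x i - y i - (v i : ℝ)) ^ 2)

/-- Membership in the (torus) cube of side `ε` centered at `z`. -/
def InCubeT (d : ℕ) (ε : ℝ) (z x : Fin d → ℝ) : Prop :=
  ∃ v : Fin d → ℤ, ∀ i, |x i - z i - (v i : ℝ)| ≤ ε / 2

/-- The discretized cube `Q^n_ε(z) = Q_ε(z) ∩ Ξ_n`. -/
def QT (d : ℕ) (ε : ℝ) (z : Fin d → ℝ) (n : ℕ) : Finset (Fin d → ℝ) :=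
  (XiT d n).filter (InCubeT d ε z)

/-- The Hessian matrix of `F` at `x`. -/
def HessT (d : ℕ) (F : (Fin d → ℝ) → ℝ) (x : Fin d → ℝ) : Matrix (Fin d) (Fin d) ℝ :=
  Matrix.of fun i j => fderiv ℝ (fun y => fderiv ℝ F y (Pi.single j 1)) x (Pi.single i 1)

/-! ### Nearest neighbours in the discretized torus -/

/-- Forward (`true`) and backward (`false`) lattice directions, as signs. -/
def sgnT (b : Bool) : ℝ := if b then 1 else -1

/-- The nearest neighbour of `x` in direction `±eᵢ`, for `p = (i, ±)`, represented in `[0,1)^d`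
by taking fractional parts. -/
def nbT (d n : ℕ) (x : Fin d → ℝ) (p : Fin d × Bool) : Fin d → ℝ :=
  fun j => Int.fract (x j + if j = p.1 then sgnT p.2 / n else 0)

lemma mem_XiT {d n : ℕ} (hn : 0 < n) (x : Fin d → ℝ) :
    x ∈ XiT d n ↔ ∀ j, x j ∈ Set.Ico (0 : ℝ) 1 ∧ ∃ m : ℤ, x j = m / n := by
  have hn' : (0 : ℝ) < n := by exact_mod_cast hn
  constructor
  · intro h
    simp only [XiT, Finset.mem_image, Finset.mem_univ, true_and] at h
    obtain ⟨k, rfl⟩ := h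
    intro j
    refine ⟨⟨by positivity, ?_⟩, (k j : ℕ), by simp⟩
    rw [div_lt_one hn']
    exact_mod_cast (k j).2
  · intro h
    choose h1 m hm using h
    have hm0 : ∀ j, 0 ≤ m j := fun j => by
      have := (h1 j).1
      rw [hm j, le_div_iff₀ hn', zero_mul] at this
      exact_mod_cast this
    have hm1 : ∀ j, m j < n := fun j => by
      have := (h1 j).2
      rw [hm j, div_lt_one hn'] at this
      exact_mod_cast this
    simp only [XiT, Finset.mem_image, Finset.mem_univ, true_and]
    refine ⟨fun j => ⟨(m j).toNat, by have := hm0 j; have := hm1 j; omega⟩, ?_⟩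
    funext j
    have : (((m j).toNat : ℤ) : ℝ) = m j := by rw [Int.toNat_of_nonneg (hm0 j)]
    change ((m j).toNat : ℝ) / n = x j
    rw [hm j, ← this, Int.cast_natCast]

lemma NbrT_symm {d n : ℕ} {x y : Fin d → ℝ} : NbrT d n x y ↔ NbrT d n y x := by
  have key : ∀ x y : Fin d → ℝ, NbrT d n x y → NbrT d n y x := by
    rintro x y ⟨i, s, hs, v, h⟩
    refine ⟨i, -s, by rcases hs with h | h <;> simp [h], fun j => -v j, fun j => ?_⟩
    rw [h j]
    split_ifs <;> push_cast <;> ring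
  exact ⟨key x y, key y x⟩

lemma abs_sgnT (b : Bool) : |sgnT b| = 1 := by cases b <;> simp [sgnT]

lemma int_eq_zero_of_abs_lt {r : ℝ} {z : ℤ} (h : r = z) (hr : |r| < 1) : r = 0 := by
  have : |z| < 1 := by rw [h] at hr; exact_mod_cast hr
  rw [h, Int.abs_lt_one_iff.1 this]; simp

lemma abs_step {n : ℕ} (hn : 3 ≤ n) (b : Bool) : |sgnT b / n| ≤ 1 / 3 := by
  have : (3 : ℝ) ≤ n := by exact_mod_cast hn
  rw [abs_div, abs_sgnT, abs_of_nonneg (by positivity : (0 : ℝ) ≤ n)]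
  exact one_div_le_one_div_of_le (by norm_num) this

lemma nbT_inj {d n : ℕ} (hn : 3 ≤ n) (x : Fin d → ℝ) : Function.Injective (nbT d n x) := by
  have hn' : (n : ℝ) ≠ 0 := by positivity
  rintro ⟨i, b⟩ ⟨i', b'⟩ h
  have h1 : ∀ j, ((if j = i then sgnT b / n else 0) : ℝ) = if j = i' then sgnT b' / n else 0 := by
    intro j
    have hj := congrFun h j
    simp only [nbT, Int.fract_eq_fract] at hj
    obtain ⟨z, hz⟩ := hj
    have ha : |((if j = i then sgnT b / n else 0) : ℝ)| ≤ 1 / 3 := by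
      split_ifs
      · exact abs_step hn b
      · simp
    have hb : |((if j = i' then sgnT b' / n else 0) : ℝ)| ≤ 1 / 3 := by
      split_ifs
      · exact abs_step hn b'
      · simp
    have := int_eq_zero_of_abs_lt hz (by rw [abs_le] at ha hb; rw [abs_lt]; constructor <;> linarith)
    linarith
  have h2 := h1 i
  have h0 : sgnT b ≠ 0 := by have := abs_sgnT b; intro h; simp [h] at this
  by_cases hi : i = i'
  · subst hi
    simp only [if_true, div_left_inj' hn'] at h2
    have : b = b' := by
      revert h2; cases b <;> cases b' <;> simp [sgnT] <;> norm_num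
    rw [this]
  · simp only [if_true, hi, if_false, div_eq_zero_iff, h0, hn', or_self] at h2

lemma nbT_mem {d n : ℕ} (hn : 3 ≤ n) {x : Fin d → ℝ} (hx : x ∈ XiT d n) (p : Fin d × Bool) :
    nbT d n x p ∈ XiT d n := by
  have hn0 : 0 < n := by omega
  have hn' : (n : ℝ) ≠ 0 := by positivity
  rw [mem_XiT hn0] at hx ⊢
  intro j
  refine ⟨⟨Int.fract_nonneg _, Int.fract_lt_one _⟩, ?_⟩
  obtain ⟨m, hm⟩ := (hx j).2
  have hs : ∃ k : ℤ, ((if j = p.1 then sgnT p.2 / n else 0) : ℝ) = k / n := by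
    by_cases h : j = p.1
    · exact ⟨if p.2 then 1 else -1, by simp only [h, if_true, sgnT]; split_ifs <;> simp⟩
    · exact ⟨0, by simp [h]⟩
  obtain ⟨k, hk⟩ := hs
  refine ⟨m + k - ⌊x j + if j = p.1 then sgnT p.2 / n else 0⌋ * n, ?_⟩
  simp only [nbT, Int.fract]
  push_cast
  rw [hk, hm]
  field_simp

lemma nbT_ne {d n : ℕ} (hn : 3 ≤ n) {x : Fin d → ℝ} (hx : x ∈ XiT d n) (p : Fin d × Bool) :
    nbT d n x p ≠ x := by
  have hn0 : 0 < n := by omega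
  have hn' : (n : ℝ) ≠ 0 := by positivity
  intro h
  have hj := congrFun h p.1
  simp only [nbT, if_true] at hj
  have hx1 := ((mem_XiT hn0 x).1 hx p.1).1
  have h3 := Int.fract_add_floor (x p.1 + sgnT p.2 / n)
  have := int_eq_zero_of_abs_lt (r := sgnT p.2 / n) (z := ⌊x p.1 + sgnT p.2 / n⌋) (by linarith)
    (by have := abs_step hn p.2; linarith)
  have h0 := abs_sgnT p.2
  rw [div_eq_zero_iff] at this
  rcases this with h | h
  · simp [h] at h0
  · exact hn' h

lemma NbrT_iff {d n : ℕ} {x y : Fin d → ℝ} (hy : ∀ j, y j ∈ Set.Ico (0 : ℝ) 1) :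
    NbrT d n x y ↔ ∃ p, nbT d n x p = y := by
  constructor
  · rintro ⟨i, s, hs, v, h⟩
    refine ⟨(i, decide (s = 1)), ?_⟩
    have hs' : sgnT (decide (s = 1)) = s := by
      rcases hs with h | h
      · simp [sgnT, h]
      · rw [h]; norm_num [sgnT]
    funext j
    simp only [nbT, hs']
    rw [← Int.fract_add_intCast _ (v j), ← h j, Int.fract_eq_self]
    exact hy j
  · rintro ⟨p, rfl⟩
    refine ⟨p.1, sgnT p.2, by cases p.2 <;> simp [sgnT],
      fun j => -⌊x j + if j = p.1 then sgnT p.2 / n else 0⌋, fun j => ?_⟩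
    simp only [nbT, Int.fract]
    push_cast
    ring

/-- For `n ≥ 3` the `2d` neighbours of a lattice point are pairwise distinct and differ from the
point itself, so a sum over neighbours is a sum over directions. -/
lemma sum_nbr {d n : ℕ} (hn : 3 ≤ n) {x : Fin d → ℝ} (hx : x ∈ XiT d n) (f : (Fin d → ℝ) → ℝ) :
    ∑ y ∈ (XiT d n).erase x, (if NbrT d n x y then f y else 0)
      = ∑ p : Fin d × Bool, f (nbT d n x p) := by
  have hn0 : 0 < n := by omega
  rw [← Finset.sum_filter]
  symm
  refine Finset.sum_bij (fun p _ => nbT d n x p) ?_ ?_ ?_ ?_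
  · intro p _
    rw [Finset.mem_filter, Finset.mem_erase]
    have hm := nbT_mem hn hx p
    exact ⟨⟨nbT_ne hn hx p, hm⟩,
      (NbrT_iff fun j => ((mem_XiT hn0 _).1 hm j).1).2 ⟨p, rfl⟩⟩
  · intro p _ q _ h
    exact nbT_inj hn x h
  · intro y hy
    rw [Finset.mem_filter, Finset.mem_erase] at hy
    obtain ⟨p, hp⟩ := (NbrT_iff fun j => ((mem_XiT hn0 _).1 hy.1.2 j).1).1 hy.2
    exact ⟨p, Finset.mem_univ _, hp⟩
  · intros; rfl

/-! ### The rate functional dominates a potential -/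

/-- Expanding the square and estimating the cross term by `2ab ≤ a² + b²`; here `α²`, `β²` are the
stationary weights and `β / α` is the jump rate. -/
lemma sq_term {α β a b : ℝ} (hα : 0 < α) (hβ : 0 < β) :
    a ^ 2 * (β / α - 1) + b ^ 2 * (α / β - 1) ≤ α ^ 2 * (β / α) * (b / β - a / α) ^ 2 := by
  have : α ^ 2 * (β / α) * (b / β - a / α) ^ 2
      = a ^ 2 * (β / α - 1) + b ^ 2 * (α / β - 1) + (a - b) ^ 2 := by
    field_simp
    ring
  rw [this]
  have := sq_nonneg (a - b)
  linarith

lemma ZT_pos {d n : ℕ} (F : (Fin d → ℝ) → ℝ) (hn : 0 < n) : 0 < ZT d F n := by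
  apply Finset.sum_pos
  · intro x _; positivity
  · refine ⟨0, (mem_XiT hn _).2 fun j => ⟨by simp, 0, by simp⟩⟩

/-- Each edge term of the rate functional dominates the two contributions of that edge to the
mean of the potential, one from each end point. -/
lemma edge_bound {d n : ℕ} (F : (Fin d → ℝ) → ℝ) (hn : 0 < n) (x y : Fin d → ℝ)
    {μ : (Fin d → ℝ) → ℝ} (hx : 0 ≤ μ x) (hy : 0 ≤ μ y) :
    (if NbrT d n x y then μ x * (Real.exp (-((n : ℝ) / 2) * (F y - F x)) - 1) else 0)
      + (if NbrT d n y x then μ y * (Real.exp (-((n : ℝ) / 2) * (F x - F y)) - 1) else 0)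
      ≤ piT d F n x * RT d F n x y *
        (Real.sqrt (μ y / piT d F n y) - Real.sqrt (μ x / piT d F n x)) ^ 2 := by
  have hZ := ZT_pos F hn
  by_cases h : NbrT d n x y
  · have h' := NbrT_symm.1 h
    simp only [RT, h, h', if_true]
    set ρ : (Fin d → ℝ) → ℝ := fun w => Real.exp (-((n : ℝ) / 2) * F w) / Real.sqrt (ZT d F n)
      with hρ
    have hρ0 : ∀ w, 0 < ρ w := fun w => by positivity
    have hπ : ∀ w, piT d F n w = ρ w ^ 2 := fun w => by
      simp only [hρ, piT, div_pow, Real.sq_sqrt hZ.le, ← Real.exp_nat_mul]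
      congr 2
      push_cast; ring
    have hR : ∀ u w, Real.exp (-((n : ℝ) / 2) * (F w - F u)) = ρ w / ρ u := fun u w => by
      simp only [hρ]
      rw [div_div_div_cancel_right₀ (Real.sqrt_pos.2 hZ).ne', ← Real.exp_sub]
      congr 1; ring
    have hs : ∀ w, Real.sqrt (μ w / ρ w ^ 2) = Real.sqrt (μ w) / ρ w := fun w => by
      rw [Real.sqrt_div' _ (by positivity), Real.sqrt_sq (hρ0 w).le]
    rw [hR, hR, hπ, hπ, hs, hs]
    have := sq_term (a := Real.sqrt (μ x)) (b := Real.sqrt (μ y)) (hρ0 x) (hρ0 y)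
    rwa [Real.sq_sqrt hx, Real.sq_sqrt hy] at this
  · have hyx := mt NbrT_symm.2 h
    simp [RT, h, hyx]

/-- The rate functional dominates the mean under `μ` of the potential
`V(x) = Σ_{y ∼ x} (R_n(x,y) - 1)`. -/
lemma IT_lower {d n : ℕ} (F : (Fin d → ℝ) → ℝ) (hn : 3 ≤ n) {μ : (Fin d → ℝ) → ℝ}
    (hμ : ∀ x ∈ XiT d n, 0 ≤ μ x) :
    ∑ x ∈ XiT d n, μ x * ∑ p : Fin d × Bool,
      (Real.exp (-((n : ℝ) / 2) * (F (nbT d n x p) - F x)) - 1) ≤ IT d F n μ := by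
  set A : (Fin d → ℝ) → (Fin d → ℝ) → ℝ := fun x y =>
    if NbrT d n x y then μ x * (Real.exp (-((n : ℝ) / 2) * (F y - F x)) - 1) else 0 with hA
  have h1 : ∑ x ∈ XiT d n, ∑ y ∈ (XiT d n).erase x, (A x y + A y x) ≤
      ∑ x ∈ XiT d n, ∑ y ∈ (XiT d n).erase x, piT d F n x * RT d F n x y *
      (Real.sqrt (μ y / piT d F n y) - Real.sqrt (μ x / piT d F n x)) ^ 2 := by
    refine Finset.sum_le_sum fun x hx => Finset.sum_le_sum fun y hy => ?_
    exact edge_bound F (by omega) x y (hμ x hx) (hμ y (Finset.mem_of_mem_erase hy))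
  have h2 : ∑ x ∈ XiT d n, ∑ y ∈ (XiT d n).erase x, A y x
      = ∑ x ∈ XiT d n, ∑ y ∈ (XiT d n).erase x, A x y := by
    apply Finset.sum_comm'
    intro x y
    simp only [Finset.mem_erase]
    tauto
  have h3 : ∑ x ∈ XiT d n, ∑ y ∈ (XiT d n).erase x, A x y
      = ∑ x ∈ XiT d n, μ x * ∑ p : Fin d × Bool,
      (Real.exp (-((n : ℝ) / 2) * (F (nbT d n x p) - F x)) - 1) := by
    refine Finset.sum_congr rfl fun x hx => ?_
    rw [hA, sum_nbr hn hx, Finset.mul_sum]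
  simp only [Finset.sum_add_distrib] at h1
  rw [h2, h3] at h1
  unfold IT
  linarith

/-! ### Expansion of the potential -/

lemma sq_le_exp_add_exp (p : ℝ) : p ^ 2 ≤ Real.exp p + Real.exp (-p) - 2 := by
  have h : |p / 2| ≤ |Real.sinh (p / 2)| := by
    rw [Real.abs_sinh]
    exact Real.self_le_sinh_iff.2 (abs_nonneg _)
  have h2 := sq_le_sq.2 h
  have h3 : Real.cosh p = 1 + 2 * Real.sinh (p / 2) ^ 2 := by
    have := Real.cosh_two_mul (p / 2)
    have h4 := Real.cosh_sq (p / 2)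
    rw [show 2 * (p / 2) = p by ring] at this
    linarith
  rw [Real.cosh_eq] at h3
  linarith

/-- The exponential lies above its tangent line at `p`. -/
lemma exp_tangent {p u M δ : ℝ} (hp : |p| ≤ M) (hδ : |u - p| ≤ δ) :
    Real.exp p - Real.exp M * δ ≤ Real.exp u := by
  have h1 : Real.exp p * (u - p + 1) ≤ Real.exp u := by
    have := mul_le_mul_of_nonneg_left (Real.add_one_le_exp (u - p)) (Real.exp_pos p).le
    rwa [← Real.exp_add, add_sub_cancel] at this
  have h2 : Real.exp p ≤ Real.exp M := Real.exp_le_exp.2 ((le_abs_self p).trans hp)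
  have h3 : Real.exp p * |u - p| ≤ Real.exp M * δ :=
    mul_le_mul h2 hδ (abs_nonneg _) (Real.exp_pos M).le
  have h4 : -(Real.exp p * |u - p|) ≤ Real.exp p * (u - p) := by
    rw [← mul_neg]
    exact mul_le_mul_of_nonneg_left (neg_abs_le _) (Real.exp_pos p).le
  linarith

/-- The gradient of `F` as a vector of partial derivatives. -/
def gradT (d : ℕ) (F : (Fin d → ℝ) → ℝ) (x : Fin d → ℝ) : Fin d → ℝ :=
  fun i => fderiv ℝ F x (Pi.single i 1)

lemma F_nbT {d n : ℕ} {F : (Fin d → ℝ) → ℝ} (hF : PerT d F) (x : Fin d → ℝ)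
    (p : Fin d × Bool) :
    F (nbT d n x p) = F (x + Pi.single p.1 (sgnT p.2 / n)) := by
  rw [← hF (x + (Pi.single p.1 (sgnT p.2 / n) : Fin d → ℝ))
    (fun j => -⌊x j + if j = p.1 then sgnT p.2 / n else 0⌋)]
  congr 1
  funext j
  simp only [nbT, Int.fract, Pi.add_apply, Pi.single_apply]
  push_cast
  ring

lemma gradT_per {d : ℕ} {F : (Fin d → ℝ) → ℝ} (hF : PerT d F) (x : Fin d → ℝ)
    (v : Fin d → ℤ) : gradT d F (fun i => x i + v i) = gradT d F x := by
  have h : (fun y => F (y + fun i => (v i : ℝ))) = F := funext fun y => hF y v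
  have h2 := fderiv_comp_add_right (𝕜 := ℝ) (f := F) (x := x) (fun i => (v i : ℝ))
  rw [h] at h2
  unfold gradT
  rw [h2]
  rfl

/-- First-order Taylor expansion along the coordinate axes with a uniform quadratic remainder,
and a uniform bound on the gradient, over the fundamental domain. -/
lemma taylor {d : ℕ} {F : (Fin d → ℝ) → ℝ} (hF : ContDiff ℝ 2 F) :
    ∃ K M : ℝ, 0 ≤ K ∧ (∀ x : Fin d → ℝ, (∀ j, x j ∈ Set.Ico (0 : ℝ) 1) → ∀ i,
      |gradT d F x i| ≤ M ∧ ∀ h : ℝ, |h| ≤ 1 →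
        |F (x + Pi.single i h) - F x - h * gradT d F x i| ≤ K * h ^ 2) := by
  have h1 : ContDiff ℝ 1 (fderiv ℝ F) := hF.fderiv_right (by norm_num)
  have h2 : Continuous (fderiv ℝ (fderiv ℝ F)) := h1.continuous_fderiv (by norm_num)
  set B : Set (Fin d → ℝ) := Set.Icc (fun _ => -1) (fun _ => 2) with hB
  have hBc : IsCompact B := isCompact_Icc
  obtain ⟨K, hK⟩ := hBc.exists_bound_of_continuousOn (f := fderiv ℝ (fderiv ℝ F)) h2.continuousOn
  obtain ⟨M, hM⟩ := hBc.exists_bound_of_continuousOn h1.continuous.continuousOn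
  refine ⟨max K 0, M, le_max_right _ _, fun x hx i => ?_⟩
  have hxB : x ∈ B :=
    ⟨fun j => by have := (hx j).1; simp only; linarith,
     fun j => by have := (hx j).2; simp only; linarith⟩
  have hn1 : ∀ h : ℝ, ‖(Pi.single i h : Fin d → ℝ)‖ = |h| := fun h => by
    rw [Pi.norm_single, Real.norm_eq_abs]
  constructor
  · have := (fderiv ℝ F x).le_of_opNorm_le (hM x hxB) (Pi.single i 1)
    rw [hn1, abs_one, mul_one, Real.norm_eq_abs] at this
    exact this
  · intro h hh
    set y := x + Pi.single i h with hy
    have hyB : y ∈ B := by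
      rw [abs_le] at hh
      constructor
      · intro j
        have := (hx j).1
        simp only [hy, Pi.add_apply, Pi.single_apply]
        split_ifs <;> linarith
      · intro j
        have := (hx j).2
        simp only [hy, Pi.add_apply, Pi.single_apply]
        split_ifs <;> linarith
    have hyx : y - x = Pi.single i h := by simp [hy]
    have hconv : Convex ℝ B := convex_Icc _ _
    have hseg : segment ℝ x y ⊆ B := hconv.segment_subset hxB hyB
    have hLip : ∀ w ∈ segment ℝ x y, ‖fderiv ℝ F w - fderiv ℝ F x‖ ≤ max K 0 * |h| := by
      intro w hw
      have := hconv.norm_image_sub_le_of_norm_fderiv_le (𝕜 := ℝ) (f := fderiv ℝ F) (C := max K 0)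
        (fun z _ => (h1.differentiable (by norm_num)) z)
        (fun z hz => (hK z hz).trans (le_max_left _ _)) hxB (hseg hw)
      refine this.trans (mul_le_mul_of_nonneg_left ?_ (le_max_right _ _))
      rw [← hn1, ← hyx]
      exact norm_sub_le_of_mem_segment hw
    have := (convex_segment x y).norm_image_sub_le_of_norm_fderiv_le' (𝕜 := ℝ) (f := F)
      (φ := fderiv ℝ F x) (fun z _ => (hF.differentiable (by norm_num)) z) hLip
      (left_mem_segment ℝ x y) (right_mem_segment ℝ x y)
    rw [hyx, hn1, Real.norm_eq_abs] at this
    have hlin : fderiv ℝ F x (Pi.single i h) = h * gradT d F x i := by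
      rw [show (Pi.single i h : Fin d → ℝ) = h • Pi.single i 1 by
        rw [← Pi.single_smul]; simp, map_smul]
      rfl
    rw [hlin, mul_assoc, abs_mul_abs_self, ← pow_two] at this
    exact this

/-- The potential `Σ_{y ∼ x} (R_n(x,y) - 1)` is at least `|∇F(x)|²/4 - O(1/n)`, uniformly. -/
lemma potential_lower {d : ℕ} {F : (Fin d → ℝ) → ℝ} (hFper : PerT d F) (hF : ContDiff ℝ 2 F) :
    ∃ C : ℝ, ∀ n : ℕ, 3 ≤ n → ∀ x ∈ XiT d n,
      ∑ i, gradT d F x i ^ 2 / 4 - C / n ≤ ∑ p : Fin d × Bool,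
        (Real.exp (-((n : ℝ) / 2) * (F (nbT d n x p) - F x)) - 1) := by
  obtain ⟨K, M, hK, hKM⟩ := taylor hF
  refine ⟨∑ _i : Fin d, Real.exp (M / 2) * K, fun n hn x hx => ?_⟩
  have hn0 : (0 : ℝ) < n := by positivity
  have hx' := fun j => ((mem_XiT (by omega) x).1 hx j).1
  rw [Finset.sum_div, ← Finset.sum_sub_distrib, Fintype.sum_prod_type]
  refine Finset.sum_le_sum fun i _ => ?_
  obtain ⟨hM, hT⟩ := hKM x hx' i
  rw [Fintype.sum_bool]
  simp only [F_nbT hFper]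
  -- `δ = K / (2n)` is the error of the linearised exponent `∓ ∂ᵢF(x) / 2`
  have key : ∀ b : Bool, |-((n : ℝ) / 2) * (F (x + Pi.single i (sgnT b / n)) - F x)
      - -(sgnT b * gradT d F x i / 2)| ≤ K / (2 * n) := by
    intro b
    have h1 := hT (sgnT b / n) ((abs_step hn b).trans (by norm_num))
    have hs : sgnT b ^ 2 = 1 := by rw [← sq_abs, abs_sgnT]; norm_num
    have h2 : -((n : ℝ) / 2) * (F (x + Pi.single i (sgnT b / n)) - F x)
      - -(sgnT b * gradT d F x i / 2) = -((n : ℝ) / 2) *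
        (F (x + Pi.single i (sgnT b / n)) - F x - sgnT b / n * gradT d F x i) := by
      field_simp
      ring
    rw [h2, abs_mul, abs_neg, abs_of_pos (by positivity : (0 : ℝ) < n / 2)]
    refine (mul_le_mul_of_nonneg_left h1 (by positivity)).trans (le_of_eq ?_)
    rw [div_pow, hs]
    field_simp
  have hb : ∀ b : Bool, |-(sgnT b * gradT d F x i / 2)| ≤ M / 2 := by
    intro b
    rw [abs_neg, abs_div, abs_mul, abs_sgnT, one_mul, abs_two]
    linarith
  have e1 := exp_tangent (hb true) (key true)
  have e2 := exp_tangent (hb false) (key false)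
  have e3 := sq_le_exp_add_exp (gradT d F x i / 2)
  have a1 : -(sgnT true * gradT d F x i / 2) = -(gradT d F x i / 2) := by simp [sgnT]
  have a2 : -(sgnT false * gradT d F x i / 2) = gradT d F x i / 2 := by simp [sgnT]; ring
  rw [a1] at e1
  rw [a2] at e2
  have e4 : Real.exp (M / 2) * K / n = 2 * (Real.exp (M / 2) * (K / (2 * n))) := by
    field_simp
  have e5 : (gradT d F x i / 2) ^ 2 = gradT d F x i ^ 2 / 4 := by ring
  linarith

/-! ### Neighbourhoods of the critical points -/

/-- At a nondegenerate critical point the gradient grows at least linearly. -/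
lemma grad_lower {d : ℕ} {F : (Fin d → ℝ) → ℝ} (hF : ContDiff ℝ 2 F) {z : Fin d → ℝ}
    (hz : fderiv ℝ F z = 0) (hdet : (HessT d F z).det ≠ 0) :
    ∃ C : ℝ, 0 ≤ C ∧ ∀ᶠ x in nhds z, ‖x - z‖ ≤ C * ‖gradT d F x‖ := by
  have h1 : ContDiff ℝ 1 (fderiv ℝ F) := hF.fderiv_right (by norm_num)
  have hg : ∀ i, DifferentiableAt ℝ (fun y => gradT d F y i) z := fun i =>
    ((h1.differentiable (by norm_num)) z).clm_apply (differentiableAt_const _)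
  set D : (Fin d → ℝ) →L[ℝ] (Fin d → ℝ) :=
    ContinuousLinearMap.pi fun i => fderiv ℝ (fun y => gradT d F y i) z with hD
  have hgD : HasFDerivAt (gradT d F) D z :=
    hasFDerivAt_pi.2 fun i => (hg i).hasFDerivAt
  have hDv : ∀ w, D w = Matrix.vecMul w (HessT d F z) := by
    intro w
    funext j
    have hw : w = ∑ i, w i • (Pi.single i 1 : Fin d → ℝ) := pi_eq_sum_univ' w
    conv_lhs => rw [hw]
    simp only [hD, ContinuousLinearMap.pi_apply, map_sum, map_smul, smul_eq_mul,
      Matrix.vecMul, dotProduct, HessT, Matrix.of_apply]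
    rfl
  have hker : (D : (Fin d → ℝ) →ₗ[ℝ] (Fin d → ℝ)).ker = ⊥ := by
    rw [LinearMap.ker_eq_bot']
    intro w hw
    exact Matrix.eq_zero_of_vecMul_eq_zero hdet ((hDv w).symm.trans hw)
  obtain ⟨K, hK0, hK⟩ := LinearMap.exists_antilipschitzWith _ hker
  have hK0' : (0 : ℝ) < K := by exact_mod_cast hK0
  have hDl : ∀ w, ‖w‖ ≤ K * ‖D w‖ := fun w => by
    have := hK.le_mul_dist w 0
    simpa using this
  refine ⟨2 * K, by positivity, ?_⟩
  filter_upwards [hgD.isLittleO.def (c := 1 / (2 * K)) (by positivity)] with x hx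
  have hgz : gradT d F z = 0 := by funext i; simp [gradT, hz]
  rw [hgz, sub_zero] at hx
  have h3 := hDl (x - z)
  have h4 : ‖D (x - z)‖ ≤ ‖gradT d F x‖ + ‖gradT d F x - D (x - z)‖ := by
    have := norm_sub_le (gradT d F x) (gradT d F x - D (x - z))
    rwa [sub_sub_cancel] at this
  have h5 : K * ‖gradT d F x - D (x - z)‖ ≤ ‖x - z‖ / 2 := by
    have := mul_le_mul_of_nonneg_left hx hK0'.le
    refine this.trans (le_of_eq ?_)
    field_simp
  have h6 := mul_le_mul_of_nonneg_left h4 hK0'.le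
  linarith

/-- On a small torus cube around a critical point, `|x - z|² ≤ C |∇F(x)|²`. -/
lemma tdist_bound {d : ℕ} {F : (Fin d → ℝ) → ℝ} (hFper : PerT d F) (hF : ContDiff ℝ 2 F)
    {z : Fin d → ℝ} (hz : fderiv ℝ F z = 0) (hdet : (HessT d F z).det ≠ 0) :
    ∃ C : ℝ, 0 ≤ C ∧ ∃ r > 0, ∀ ε, ε ≤ r → ∀ x, InCubeT d ε z x →
      tdistT d x z ^ 2 ≤ C * ∑ i, gradT d F x i ^ 2 := by
  obtain ⟨C, hC, hev⟩ := grad_lower hF hz hdet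
  obtain ⟨r, hr, hball⟩ := Metric.eventually_nhds_iff.1 hev
  refine ⟨d * C ^ 2, by positivity, r, hr, fun ε hε x ⟨v, hv⟩ => ?_⟩
  set w : Fin d → ℝ := fun i => x i - v i with hw
  have hgw : gradT d F w = gradT d F x := by
    rw [← gradT_per hFper w v]
    congr 1
    funext i
    simp [hw]
  have hdw : dist w z < r := by
    rw [dist_pi_lt_iff hr]
    intro i
    have h0 := hv i
    have := abs_nonneg (x i - z i - v i)
    rw [Real.dist_eq, show w i - z i = x i - z i - v i by simp only [hw]; ring]
    linarith
  have h1 := hball hdw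
  rw [hgw] at h1
  have h2 : tdistT d x z ≤ Real.sqrt (∑ i, (x i - z i - (v i : ℝ)) ^ 2) :=
    ciInf_le ⟨0, by rintro _ ⟨u, rfl⟩; exact Real.sqrt_nonneg _⟩ v
  have h0 : 0 ≤ tdistT d x z := Real.iInf_nonneg fun u => Real.sqrt_nonneg _
  have h3 : tdistT d x z ^ 2 ≤ ∑ i, (x i - z i - (v i : ℝ)) ^ 2 := by
    rw [← Real.sq_sqrt (Finset.sum_nonneg fun i _ => sq_nonneg (x i - z i - (v i : ℝ)))]
    exact pow_le_pow_left₀ h0 h2 2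
  have h4 : ∀ i, (x i - z i - (v i : ℝ)) ^ 2 ≤ ‖w - z‖ ^ 2 := fun i => by
    have := norm_le_pi_norm (w - z) i
    rw [show x i - z i - (v i : ℝ) = (w - z) i by simp only [hw, Pi.sub_apply]; ring, ← sq_abs]
    exact pow_le_pow_left₀ (abs_nonneg _) this 2
  have h5 : ‖gradT d F x‖ ^ 2 ≤ ∑ i, gradT d F x i ^ 2 := by
    rw [← Real.sq_sqrt (Finset.sum_nonneg fun i _ => sq_nonneg (gradT d F x i))]
    refine pow_le_pow_left₀ (norm_nonneg _) ?_ 2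
    refine (pi_norm_le_iff_of_nonneg (Real.sqrt_nonneg _)).2 fun i => ?_
    rw [Real.norm_eq_abs, ← Real.sqrt_sq_eq_abs]
    exact Real.sqrt_le_sqrt
      (Finset.single_le_sum (f := fun i => gradT d F x i ^ 2) (fun i _ => sq_nonneg _)
        (Finset.mem_univ i))
  calc tdistT d x z ^ 2 ≤ ∑ i : Fin d, ‖w - z‖ ^ 2 := h3.trans (Finset.sum_le_sum fun i _ => h4 i)
    _ = d * ‖w - z‖ ^ 2 := by simp
    _ ≤ d * (C * ‖gradT d F x‖) ^ 2 := by gcongr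
    _ = d * C ^ 2 * ‖gradT d F x‖ ^ 2 := by ring
    _ ≤ _ := by gcongr

/-- Distinct points of the fundamental domain have disjoint small torus cubes. -/
lemma cubes_disjoint {d : ℕ} {z z' : Fin d → ℝ} (hz : ∀ i, z i ∈ Set.Ico (0 : ℝ) 1)
    (hz' : ∀ i, z' i ∈ Set.Ico (0 : ℝ) 1) (hne : z ≠ z') :
    ∃ r > 0, ∀ ε, ε ≤ r → ∀ x, ¬(InCubeT d ε z x ∧ InCubeT d ε z' x) := by
  obtain ⟨i, hi⟩ := Function.ne_iff.1 hne
  have hpos : 0 < |z i - z' i| := abs_pos.2 (sub_ne_zero.2 hi)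
  have hlt : |z i - z' i| < 1 := by
    have := hz i; have := hz' i
    simp only [Set.mem_Ico] at *
    rw [abs_lt]; constructor <;> linarith
  set δ := min |z i - z' i| (1 - |z i - z' i|) with hδ
  have hδ0 : 0 < δ := lt_min hpos (by linarith)
  refine ⟨δ / 2, by positivity, ?_⟩
  rintro ε hε x ⟨⟨v, hv⟩, ⟨v', hv'⟩⟩
  have h1 : |(z i - z' i) - ((v' i - v i : ℤ) : ℝ)| < δ := by
    have a := hv i
    have b := hv' i
    rw [abs_le] at a b
    push_cast
    rw [abs_lt]
    constructor <;> linarith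
  have hd1 : δ ≤ |z i - z' i| := min_le_left _ _
  have hd2 : δ ≤ 1 - |z i - z' i| := min_le_right _ _
  by_cases hm : v' i - v i = 0
  · rw [hm] at h1
    simp only [Int.cast_zero, sub_zero] at h1
    linarith
  · have h2 : (1 : ℝ) ≤ |((v' i - v i : ℤ) : ℝ)| := by
      exact_mod_cast Int.one_le_abs hm
    have h3 := abs_sub_abs_le_abs_sub ((v' i - v i : ℤ) : ℝ) (z i - z' i)
    rw [abs_sub_comm _ (z i - z' i)] at h3
    linarith

/-! ### Boundedness of the second moments -/

/-- If `limsup n·ℐ_n(μ_n) < ∞`, then for every sufficiently small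
`ε ∈ (0,1)` (in particular so small that the cubes `Q_ε(z)`, `z ∈ 𝒫`, are pairwise
disjoint), `limsup n·Σ_{z∈𝒫} Σ_{x∈Q^n_ε(z)} μ_n(x)|x-z|² < ∞`, with `|x-z|` the
torus distance. -/
theorem stmt16 (d : ℕ) (F : (Fin d → ℝ) → ℝ)
    (hFper : PerT d F)
    (hFC2 : ContDiff ℝ 2 F)
    (hFLip : ∃ L : NNReal, LipschitzWith L (iteratedFDeriv ℝ 2 F))
    (P : Finset (Fin d → ℝ))
    (hP : ∀ z : Fin d → ℝ, z ∈ P ↔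
      ((∀ i, z i ∈ Set.Ico (0 : ℝ) 1) ∧ fderiv ℝ F z = 0))
    (hnd : ∀ z : Fin d → ℝ, fderiv ℝ F z = 0 → (HessT d F z).det ≠ 0)
    (μn : ℕ → (Fin d → ℝ) → ℝ)
    (hμn : ∀ n, 0 < n →
      (∀ x ∈ XiT d n, 0 ≤ μn n x) ∧ ∑ x ∈ XiT d n, μn n x = 1)
    (hbdd : Filter.IsBoundedUnder (· ≤ ·) atTop
      (fun n : ℕ => (n : ℝ) * IT d F n (μn n))) :
    ∃ ε₀ : ℝ, 0 < ε₀ ∧ ε₀ < 1 ∧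
      (∀ z ∈ P, ∀ z' ∈ P, z ≠ z' →
        ∀ x : Fin d → ℝ, ¬(InCubeT d ε₀ z x ∧ InCubeT d ε₀ z' x)) ∧
      ∀ ε : ℝ, 0 < ε → ε ≤ ε₀ →
        Filter.IsBoundedUnder (· ≤ ·) atTop
          (fun n : ℕ => (n : ℝ) *
            ∑ z ∈ P, ∑ x ∈ QT d ε z n, μn n x * tdistT d x z ^ 2) := by
  -- radii valid for all points, resp. all pairs of points, of the finite set `P`
  have hT : ∀ z : P, ∃ C : ℝ, 0 ≤ C ∧ ∃ r > 0, ∀ ε, ε ≤ r → ∀ x, InCubeT d ε z.1 x →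
      tdistT d x z.1 ^ 2 ≤ C * ∑ i, gradT d F x i ^ 2 := fun z =>
    tdist_bound hFper hFC2 ((hP z.1).1 z.2).2 (hnd z.1 ((hP z.1).1 z.2).2)
  choose C hC r hr hCr using hT
  have hD : ∀ q : P × P, ∃ ρ > 0, ∀ ε, ε ≤ ρ → q.1.1 ≠ q.2.1 →
      ∀ x, ¬(InCubeT d ε q.1.1 x ∧ InCubeT d ε q.2.1 x) := fun q => by
    by_cases h : q.1.1 = q.2.1
    · exact ⟨1, one_pos, fun ε _ h' => absurd h h'⟩
    · obtain ⟨ρ, hρ, hh⟩ :=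
        cubes_disjoint ((hP q.1.1).1 q.1.2).1 ((hP q.2.1).1 q.2.2).1 h
      exact ⟨ρ, hρ, fun ε hε _ => hh ε hε⟩
  choose ρ hρ hρd using hD
  have hev : ∀ᶠ ε : ℝ in nhdsWithin 0 (Set.Ioi 0),
      (∀ z, ε ≤ r z) ∧ (∀ q, ε ≤ ρ q) ∧ 0 < ε ∧ ε < 1 := by
    have hsm : ∀ s : ℝ, 0 < s → ∀ᶠ ε : ℝ in nhdsWithin 0 (Set.Ioi 0), ε < s := fun s hs =>
      
      mem_of_superset (Ioo_mem_nhdsGT hs) fun _ h => h.2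
    refine (eventually_all.2 fun z => (hsm _ (hr z)).mono fun _ h => h.le).and
      ((eventually_all.2 fun q => (hsm _ (hρ q)).mono fun _ h => h.le).and
        ((eventually_mem_nhdsWithin (a := (0 : ℝ)) (s := Set.Ioi 0)).and (hsm 1 one_pos)))
  obtain ⟨ε₀, h1, h2, h3, h4⟩ := hev.exists
  refine ⟨ε₀, h3, h4, fun z hz z' hz' hne =>
    hρd (⟨z, hz⟩, ⟨z', hz'⟩) ε₀ (h2 _) hne, fun ε _ hε => ?_⟩
  obtain ⟨C₁, hpot⟩ := potential_lower hFper hFC2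
  obtain ⟨B, hB⟩ := hbdd
  rw [eventually_map] at hB
  have hS : 0 ≤ ∑ z : P, C z := Finset.sum_nonneg fun z _ => hC z
  refine ⟨(∑ z : P, C z) * (4 * (B + C₁)), ?_⟩
  rw [eventually_map]
  filter_upwards [hB, eventually_ge_atTop 3] with n hBn hn
  have hn0 : (0 : ℝ) < n := by positivity
  obtain ⟨hμ0, hμ1⟩ := hμn n (by omega)
  set G : (Fin d → ℝ) → ℝ := fun x => ∑ i, gradT d F x i ^ 2 with hG
  have hG0 : ∀ x, 0 ≤ G x := fun x => Finset.sum_nonneg fun i _ => sq_nonneg _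
  have hgrad : n * ∑ x ∈ XiT d n, μn n x * G x ≤ 4 * (B + C₁) := by
    have hI := IT_lower F hn hμ0
    have hle : ∑ x ∈ XiT d n, μn n x * (G x / 4 - C₁ / n) ≤ IT d F n (μn n) := by
      refine le_trans (Finset.sum_le_sum fun x hx => ?_) hI
      refine mul_le_mul_of_nonneg_left ?_ (hμ0 x hx)
      have := hpot n hn x hx
      rwa [← Finset.sum_div] at this
    have heq : ∑ x ∈ XiT d n, μn n x * (G x / 4 - C₁ / n)
        = (∑ x ∈ XiT d n, μn n x * G x) / 4 - C₁ / n := by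
      have : ∀ x ∈ XiT d n, μn n x * (G x / 4 - C₁ / n)
          = μn n x * G x / 4 - μn n x * (C₁ / n) := fun x _ => by ring
      rw [Finset.sum_congr rfl this, Finset.sum_sub_distrib, ← Finset.sum_div,
        ← Finset.sum_mul, hμ1, one_mul]
    rw [heq] at hle
    have h5 := (mul_le_mul_of_nonneg_left hle hn0.le).trans hBn
    have h6 : (n : ℝ) * (C₁ / n) = C₁ := by field_simp
    rw [mul_sub, h6] at h5
    linarith
  have hz : ∀ z : P, ∑ x ∈ QT d ε z.1 n, μn n x * tdistT d x z.1 ^ 2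
      ≤ C z * ∑ x ∈ XiT d n, μn n x * G x := fun z => by
    rw [Finset.mul_sum]
    refine (Finset.sum_le_sum fun x hx => ?_).trans
      (Finset.sum_le_sum_of_subset_of_nonneg (Finset.filter_subset _ _) fun x hx _ =>
        mul_nonneg (hC z) (mul_nonneg (hμ0 x hx) (hG0 x)))
    have hx' := Finset.mem_filter.1 hx
    calc μn n x * tdistT d x z.1 ^ 2 ≤ μn n x * (C z * G x) :=
          mul_le_mul_of_nonneg_left (hCr z ε (hε.trans (h1 z)) x hx'.2) (hμ0 x hx'.1)
      _ = C z * (μn n x * G x) := by ring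
  rw [← Finset.sum_coe_sort P]
  calc (n : ℝ) * ∑ z : P, ∑ x ∈ QT d ε z.1 n, μn n x * tdistT d x z.1 ^ 2
      ≤ n * ∑ z : P, C z * ∑ x ∈ XiT d n, μn n x * G x :=
        mul_le_mul_of_nonneg_left (Finset.sum_le_sum fun z _ => hz z) hn0.le
    _ = (∑ z : P, C z) * (n * ∑ x ∈ XiT d n, μn n x * G x) := by
        rw [← Finset.sum_mul]; ring
    _ ≤ _ := mul_le_mul_of_nonneg_left hgrad hS

end
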